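/- The metric d[l] on S is intrinsic: for all x, y ∈ S, d[l](x,y) = inf{ L(γ, d[l]) : γ : [0,1] → S continuous, γ(0) = x, γ(1) = y }. -/

import Mathlib

noncomputable section

open Set
open scoped ENNReal

/-- The Euclidean plane `ℝ²` with the Euclidean metric. -/
abbrev E2 : Type := EuclideanSpace ℝ (Fin 2)

/-- Vertices of the fixed closed regular (equilateral) triangle of side length 1. -/
def p0 : E2 := !₂[0, 0]
def p1 : E2 := !₂[1, 0]
def p2 : E2 := !₂[1 / 2, Real.sqrt 3 / 2]

/-- `Dtri` is the fixed closed regular triangle in `ℝ²` with edge length 1. -/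
def Dtri : Set E2 := convexHull ℝ {p0, p1, p2}

/-- `V0` is the set of the three vertices of `Dtri`. -/
def V0 : Set E2 := {p0, p1, p2}

/-- The three closed edges of `Dtri`. -/
def e01 : Set E2 := segment ℝ p0 p1
def e12 : Set E2 := segment ℝ p1 p2
def e02 : Set E2 := segment ℝ p0 p2

/-- `E0` is the set of the three closed edges of `Dtri`. -/
def E0 : Set (Set E2) := {e01, e12, e02}

/-- The open edge `e° = e ∖ V₀`. -/
def eo (e : Set E2) : Set E2 := e \ V0

/-- `Do = D°` is the interior of `Dtri` in `ℝ²`. -/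
def Do : Set E2 := interior Dtri

/-- `l : E₀ → ℝ` is positive and satisfies the strict triangle inequalities:
`l e₁ + l e₂ > l e₃` whenever `{e₁, e₂, e₃} = E₀`. -/
def TriIneq (l : Set E2 → ℝ) : Prop :=
  (∀ e ∈ E0, 0 < l e) ∧
  ∀ e₁ e₂ e₃ : Set E2, ({e₁, e₂, e₃} : Set (Set E2)) = E0 → l e₁ + l e₂ > l e₃

/-- A linear map `f : ℝ² → ℝ²` realizes the edge lengths `l`, i.e. for each `e ∈ E₀`
the segment `f(e)` has Euclidean length `l e`. -/
def Realizes (f : E2 →ₗ[ℝ] E2) (l : Set E2 → ℝ) : Prop :=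
  dist (f p0) (f p1) = l e01 ∧ dist (f p1) (f p2) = l e12 ∧ dist (f p0) (f p2) = l e02

/-- The metric `d[l]` on `Dtri`, defined by `d[l](x,y) = |f x - f y|₂` for a linear map `f`
realizing the edge lengths `l` (this is independent of the choice of `f`). -/
def dD (l : Set E2 → ℝ) (x y : E2) : ℝ :=
  letI := Classical.propDecidable (∃ f : E2 →ₗ[ℝ] E2, Realizes f l)
  if h : ∃ f : E2 →ₗ[ℝ] E2, Realizes f l then dist (h.choose x) (h.choose y) else 0

/-- A triangulation `T = (σᵢ)_{i ∈ I}`, `I = Fin n`, of a topological space `S`: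
a finite family of continuous maps `σᵢ : Dtri → S` such that
(a) `σᵢ` is injective on each open edge, (b) `σᵢ` is injective on `D°`,
(c) `S` is the disjoint union of `⋃ᵢ σᵢ(V₀)`, the sets `σᵢ(D°)`, and the distinct sets
among the `σᵢ(e°)`, and (d) glued edges are identified by a linear homeomorphism. -/
structure Triangulation (S : Type) [TopologicalSpace S] (n : ℕ) where
  σ : Fin n → E2 → S
  continuousOn : ∀ i, ContinuousOn (σ i) Dtri
  inj_edge : ∀ i, ∀ e ∈ E0, InjOn (σ i) (eo e)
  inj_int : ∀ i, InjOn (σ i) Do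
  cover : (⋃ i, σ i '' V0) ∪ (⋃ i, σ i '' Do) ∪ (⋃ i, ⋃ e ∈ E0, σ i '' eo e) = univ
  disj_int : ∀ i j, i ≠ j → Disjoint (σ i '' Do) (σ j '' Do)
  disj_vert_int : ∀ j, Disjoint (⋃ i, σ i '' V0) (σ j '' Do)
  disj_vert_edge : ∀ j, ∀ e ∈ E0, Disjoint (⋃ i, σ i '' V0) (σ j '' eo e)
  disj_int_edge : ∀ i j, ∀ e ∈ E0, Disjoint (σ i '' Do) (σ j '' eo e)
  edge_eq_or_disjoint : ∀ i j, ∀ e ∈ E0, ∀ e' ∈ E0,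
    σ i '' eo e = σ j '' eo e' ∨ Disjoint (σ i '' eo e) (σ j '' eo e')
  glue : ∀ i j, ∀ e ∈ E0, ∀ e' ∈ E0, σ i '' eo e = σ j '' eo e' →
    ∃ A : E2 →ᵃ[ℝ] E2, A '' e = e' ∧ ∀ x ∈ e, σ j (A x) = σ i x

variable {S : Type} [TopologicalSpace S] {n : ℕ}

/-- `l ∈ ℝ^{E(T)}_Δ`: `l` assigns positive lengths to the edges of `T` satisfying the
strict triangle inequalities in each triangle. -/
def TriIneqT (T : Triangulation S n) (l : Set S → ℝ) : Prop :=
  (∀ (i : Fin n), ∀ e ∈ E0, 0 < l (T.σ i '' e)) ∧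
  ∀ (i : Fin n), ∀ e₁ e₂ e₃ : Set E2, ({e₁, e₂, e₃} : Set (Set E2)) = E0 →
    l (T.σ i '' e₁) + l (T.σ i '' e₂) > l (T.σ i '' e₃)

/-- The restricted edge lengths `l^{(i)}` on the triangle `σᵢ(D)`: `l^{(i)}_e = l_{σᵢ(e)}`. -/
def lRes (T : Triangulation S n) (l : Set S → ℝ) (i : Fin n) : Set E2 → ℝ :=
  fun e => l (T.σ i '' e)

/-- `dᵢ(x,y) = min { d[l^{(i)}](x',y') : x' ∈ σᵢ⁻¹(x), y' ∈ σᵢ⁻¹(y) }` for `x, y ∈ σᵢ(D)`. -/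
def dTri (T : Triangulation S n) (l : Set S → ℝ) (i : Fin n) (x y : S) : ℝ :=
  sInf { r | ∃ x' ∈ Dtri, ∃ y' ∈ Dtri,
    T.σ i x' = x ∧ T.σ i y' = y ∧ r = dD (lRes T l i) x' y' }

/-- The set of sums `Σ_j d_{i_j}(x_{j-1}, x_j)` over chains from `x` to `y`. -/
def chainSums (T : Triangulation S n) (l : Set S → ℝ) (x y : S) : Set ℝ :=
  { r | ∃ (k : ℕ) (c : ℕ → S) (idx : ℕ → Fin n),
      c 0 = x ∧ c k = y ∧
      (∀ j < k, c j ∈ T.σ (idx j) '' Dtri ∧ c (j + 1) ∈ T.σ (idx j) '' Dtri) ∧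
      r = ∑ j ∈ Finset.range k, dTri T l (idx j) (c j) (c (j + 1)) }

/-- The glued metric `d[l]` on `S`. -/
def dGlue (T : Triangulation S n) (l : Set S → ℝ) (x y : S) : ℝ :=
  sInf (chainSums T l x y)

/-- The length `L(γ, d)` of a curve `γ : [0,1] → X` with respect to a metric `d`:
`L(γ,d) = sup { Σ_j d(γ t_{j-1}, γ t_j) : 0 = t₀ < t₁ < ... < t_k = 1 }`, valued in `[0,∞]`. -/
def pathLen {X : Type} (d : X → X → ℝ) (γ : ℝ → X) : ℝ≥0∞ :=
  ⨆ (k : ℕ) (t : Fin (k + 1) → ℝ) (_ : StrictMono t ∧ t 0 = 0 ∧ t (Fin.last k) = 1),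
    ENNReal.ofReal (∑ j : Fin k, d (γ (t j.castSucc)) (γ (t j.succ)))

/-!
Call `x` and `y` joined in time `r` if some curve `[0, r] → S` from `x` to `y` is `1`-Lipschitz
for `d[l]`. Rescaling to `[0, 1]` gives a curve of length at most `r`, so it suffices to join `x`
and `y` in every time `r > d[l](x, y)`. Such times add up along chains because `d[l]` satisfies the
triangle inequality, which leaves two points of a single triangle. There a straight segment works,
since the distance on the triangle is the Euclidean one pulled back along a linear map and
dominates `d[l]`.
-/

section ClosedCover

variable {X ι : Type*} [TopologicalSpace X] [PreconnectedSpace X] [Finite ι]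

theorem rel_of_finite_closed_cover {A : ι → Set X} (hA : ∀ i, IsClosed (A i))
    (hcover : ∀ x, ∃ i, x ∈ A i) {R : X → X → Prop} (htrans : ∀ x y z, R x y → R y z → R x z)
    (hR : ∀ i, ∀ x ∈ A i, ∀ y ∈ A i, R x y) (x y : X) : R x y := by
  refine PreconnectedSpace.induction₂' R (fun z => ?_) ⟨htrans⟩ x y
  filter_upwards [(locallyFinite_of_finite A).iInter_compl_mem_nhds hA z] with w hw
  obtain ⟨i, hwi⟩ := hcover w
  have hzi : z ∈ A i := by
    by_contra hzi
    exact mem_iInter₂.1 hw i hzi hwi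
  exact ⟨hR i z hzi w hwi, hR i w hwi z hzi⟩

end ClosedCover

section PathLength

variable {X : Type} {d : X → X → ℝ} {γ : ℝ → X}

theorem ofReal_le_pathLen (d : X → X → ℝ) (γ : ℝ → X) :
    ENNReal.ofReal (d (γ 0) (γ 1)) ≤ pathLen d γ := by
  have hmono : StrictMono (fun j : Fin 2 => ((j : ℕ) : ℝ)) := fun i j hij => by simpa using hij
  refine le_iSup_of_le 1 (le_iSup₂_of_le (fun j : Fin 2 => ((j : ℕ) : ℝ))
    ⟨hmono, by simp, by simp⟩ ?_)
  simp

theorem pathLen_le_of_dist_le_sub {F : ℝ → ℝ}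
    (h : ∀ s t, 0 ≤ s → s ≤ t → t ≤ 1 → d (γ s) (γ t) ≤ F t - F s) :
    pathLen d γ ≤ ENNReal.ofReal (F 1 - F 0) := by
  refine iSup_le fun k => iSup₂_le fun t ⟨hmono, h0, h1⟩ => ENNReal.ofReal_le_ofReal ?_
  have htelescope : ∑ j : Fin k, (F (t j.succ) - F (t j.castSucc)) = F 1 - F 0 := by
    have hsucc := Fin.sum_univ_succ fun j => F (t j)
    have hcastSucc := Fin.sum_univ_castSucc fun j => F (t j)
    rw [← h0, ← h1, Finset.sum_sub_distrib]
    linarith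
  rw [← htelescope]
  refine Finset.sum_le_sum fun j _ => h _ _ ?_ (hmono.monotone Fin.castSucc_lt_succ.le) ?_
  · exact h0 ▸ hmono.monotone (Fin.zero_le _)
  · exact h1 ▸ hmono.monotone (Fin.le_last _)

end PathLength

/-- `LipschitzJoined d r x y`: some continuous curve `[0, r] → X` from `x` to `y` is `1`-Lipschitz
for `d`. As in `pathLen`, curves are maps on `ℝ` of which only the restriction matters. -/
def LipschitzJoined {X : Type*} [TopologicalSpace X] (d : X → X → ℝ) (r : ℝ) (x y : X) : Prop :=
  0 ≤ r ∧ ∃ γ : ℝ → X, ContinuousOn γ (Icc 0 r) ∧ γ 0 = x ∧ γ r = y ∧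
    ∀ s t, 0 ≤ s → s ≤ t → t ≤ r → d (γ s) (γ t) ≤ t - s

namespace LipschitzJoined

theorem refl {X : Type*} [TopologicalSpace X] {d : X → X → ℝ} {r : ℝ} {x : X} (hd : d x x ≤ 0)
    (hr : 0 ≤ r) : LipschitzJoined d r x x :=
  ⟨hr, fun _ => x, continuousOn_const, rfl, rfl, fun _ _ _ hst _ => hd.trans (sub_nonneg.2 hst)⟩

theorem trans {X : Type*} [TopologicalSpace X] {d : X → X → ℝ}
    (hd : ∀ x y z, d x z ≤ d x y + d y z) {r r' : ℝ} {x y z : X}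
    (hxy : LipschitzJoined d r x y) (hyz : LipschitzJoined d r' y z) :
    LipschitzJoined d (r + r') x z := by
  obtain ⟨hr, γ, hγ, hγ0, hγr, hγd⟩ := hxy
  obtain ⟨hr', η, hη, hη0, hηr, hηd⟩ := hyz
  let δ : ℝ → X := fun t => if t ≤ r then γ t else η (t - r)
  have hδ_left : EqOn δ γ (Icc 0 r) := fun t ht => if_pos ht.2
  have hδ_right : EqOn δ (fun t => η (t - r)) (Icc r (r + r')) := fun t ht => by
    rcases ht.1.eq_or_lt with rfl | hlt
    · simp [δ, hγr, hη0]
    · exact if_neg hlt.not_ge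
  have hη_shift : ContinuousOn (fun t => η (t - r)) (Icc r (r + r')) :=
    hη.comp (by fun_prop) fun t ht => ⟨by linarith [ht.1], by linarith [ht.2]⟩
  refine ⟨add_nonneg hr hr', δ, ?_, ?_, ?_, fun s t hs hst ht => ?_⟩
  · rw [← Icc_union_Icc_eq_Icc hr (le_add_of_nonneg_right hr')]
    exact (hγ.congr hδ_left).union_of_isClosed (hη_shift.congr hδ_right) isClosed_Icc isClosed_Icc
  · rw [hδ_left ⟨le_rfl, hr⟩, hγ0]
  · simp [hδ_right ⟨le_add_of_nonneg_right hr', le_rfl⟩, hηr]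
  · rcases le_total t r with htr | hrt
    · rw [hδ_left ⟨hs, hst.trans htr⟩, hδ_left ⟨hs.trans hst, htr⟩]
      exact hγd s t hs hst htr
    rw [hδ_right ⟨hrt, ht⟩]
    rcases le_total s r with hsr | hrs
    · rw [hδ_left ⟨hs, hsr⟩]
      have hγy : d (γ s) y ≤ r - s := hγr ▸ hγd s r hs hsr le_rfl
      have hηy : d y (η (t - r)) ≤ t - r - 0 :=
        hη0 ▸ hηd 0 (t - r) le_rfl (sub_nonneg.2 hrt) (by linarith)
      linarith [hd (γ s) y (η (t - r))]
    · rw [hδ_right ⟨hrs, hst.trans ht⟩]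
      linarith [hηd (s - r) (t - r) (sub_nonneg.2 hrs) (by linarith) (by linarith)]

theorem iInf_pathLen_le {X : Type} [TopologicalSpace X] {d : X → X → ℝ} {r : ℝ} {x y : X}
    (h : LipschitzJoined d r x y) :
    ⨅ (γ : ℝ → X) (_ : ContinuousOn γ (Icc (0 : ℝ) 1) ∧ γ 0 = x ∧ γ 1 = y), pathLen d γ ≤
      ENNReal.ofReal r := by
  obtain ⟨hr, γ, hγ, hγ0, hγr, hγd⟩ := h
  have hcont : ContinuousOn (fun t => γ (r * t)) (Icc 0 1) :=
    hγ.comp (by fun_prop) fun t ht => ⟨mul_nonneg hr ht.1, mul_le_of_le_one_right hr ht.2⟩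
  have hlen : pathLen d (fun t => γ (r * t)) ≤ ENNReal.ofReal (r * 1 - r * 0) :=
    pathLen_le_of_dist_le_sub fun s t hs hst ht =>
      hγd _ _ (mul_nonneg hr hs) (mul_le_mul_of_nonneg_left hst hr) (mul_le_of_le_one_right hr ht)
  refine (iInf₂_le _ ⟨hcont, by simp [hγ0], by simp [hγr]⟩).trans (hlen.trans_eq ?_)
  rw [mul_one, mul_zero, sub_zero]

end LipschitzJoined

section Triangle

theorem convex_Dtri : Convex ℝ Dtri :=
  convex_convexHull ℝ _

theorem isCompact_Dtri : IsCompact Dtri :=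
  (Set.toFinite _).isCompact_convexHull ℝ

theorem V0_subset_Dtri : V0 ⊆ Dtri :=
  subset_convexHull ℝ _

theorem edge_subset_Dtri {e : Set E2} (he : e ∈ E0) : e ⊆ Dtri := by
  rcases he with rfl | rfl | rfl <;> exact segment_subset_convexHull (by simp) (by simp)

/-- If no linear map realizes `l`, then `dD l = 0` is the pullback along the zero map. -/
theorem exists_linearMap_dD_eq (l : Set E2 → ℝ) :
    ∃ f : E2 →ₗ[ℝ] E2, ∀ a b, dD l a b = dist (f a) (f b) := by
  by_cases h : ∃ f : E2 →ₗ[ℝ] E2, Realizes f l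
  · exact ⟨h.choose, fun a b => by rw [dD, dif_pos h]⟩
  · exact ⟨0, fun a b => by simp [dD, dif_neg h]⟩

theorem dD_nonneg (l : Set E2 → ℝ) (a b : E2) : 0 ≤ dD l a b := by
  obtain ⟨f, hf⟩ := exists_linearMap_dD_eq l
  exact hf a b ▸ dist_nonneg

theorem dD_lineMap_lineMap (l : Set E2 → ℝ) (a b : E2) (s t : ℝ) :
    dD l (AffineMap.lineMap a b s) (AffineMap.lineMap a b t) = dist s t * dD l a b := by
  obtain ⟨f, hf⟩ := exists_linearMap_dD_eq l
  have hline (u : ℝ) : f (AffineMap.lineMap a b u) = AffineMap.lineMap (f a) (f b) u :=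
    f.toAffineMap.apply_lineMap a b u
  rw [hf, hf, hline, hline, dist_lineMap_lineMap]

end Triangle

namespace Triangulation

variable (T : Triangulation S n)

theorem exists_mem_image_Dtri (x : S) : ∃ i, x ∈ T.σ i '' Dtri := by
  have hx : x ∈ (⋃ i, T.σ i '' V0) ∪ (⋃ i, T.σ i '' Do) ∪ (⋃ i, ⋃ e ∈ E0, T.σ i '' eo e) :=
    T.cover ▸ mem_univ x
  simp only [mem_union, mem_iUnion] at hx
  rcases hx with (⟨i, hi⟩ | ⟨i, hi⟩) | ⟨i, e, he, hi⟩
  · exact ⟨i, image_mono V0_subset_Dtri hi⟩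
  · exact ⟨i, image_mono interior_subset hi⟩
  · exact ⟨i, image_mono (sdiff_subset.trans (edge_subset_Dtri he)) hi⟩

theorem isClosed_image_Dtri [T2Space S] (i : Fin n) : IsClosed (T.σ i '' Dtri) :=
  (isCompact_Dtri.image_of_continuousOn (T.continuousOn i)).isClosed

end Triangulation

section GluedMetric

variable (T : Triangulation S n) (l : Set S → ℝ)

theorem dTri_nonneg (i : Fin n) (x y : S) : 0 ≤ dTri T l i x y := by
  refine Real.sInf_nonneg ?_
  rintro _ ⟨a, _, b, _, _, _, rfl⟩
  exact dD_nonneg _ a b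

theorem dTri_le_dD (i : Fin n) {a b : E2} (ha : a ∈ Dtri) (hb : b ∈ Dtri) :
    dTri T l i (T.σ i a) (T.σ i b) ≤ dD (lRes T l i) a b := by
  refine csInf_le ⟨0, ?_⟩ ⟨a, ha, b, hb, rfl, rfl, rfl⟩
  rintro _ ⟨a', _, b', _, _, _, rfl⟩
  exact dD_nonneg _ a' b'

theorem chainSums_bddBelow (x y : S) : BddBelow (chainSums T l x y) := by
  refine ⟨0, ?_⟩
  rintro _ ⟨k, c, idx, _, _, _, rfl⟩
  exact Finset.sum_nonneg fun j _ => dTri_nonneg T l _ _ _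

theorem zero_mem_chainSums (x : S) : 0 ∈ chainSums T l x x := by
  obtain ⟨i, _⟩ := T.exists_mem_image_Dtri x
  exact ⟨0, fun _ => x, fun _ => i, rfl, rfl, by simp, by simp⟩

variable {T l}

theorem add_dTri_mem_chainSums {x y z : S} {r : ℝ} {i : Fin n} (hr : r ∈ chainSums T l x y)
    (hy : y ∈ T.σ i '' Dtri) (hz : z ∈ T.σ i '' Dtri) :
    r + dTri T l i y z ∈ chainSums T l x z := by
  obtain ⟨k, c, idx, h0, rfl, hc, rfl⟩ := hr
  let c' : ℕ → S := Function.update c (k + 1) z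
  let idx' : ℕ → Fin n := Function.update idx k i
  have hc'_old {j : ℕ} (hj : j ≤ k) : c' j = c j := Function.update_of_ne (by omega) _ _
  have hc'_new : c' (k + 1) = z := Function.update_self _ _ _
  have hidx'_old {j : ℕ} (hj : j < k) : idx' j = idx j := Function.update_of_ne hj.ne _ _
  have hidx'_new : idx' k = i := Function.update_self _ _ _
  refine ⟨k + 1, c', idx', (hc'_old k.zero_le).trans h0, hc'_new, fun j hj => ?_, ?_⟩
  · rcases Nat.lt_succ_iff_lt_or_eq.1 hj with hjk | rfl
    · rw [hidx'_old hjk, hc'_old hjk.le, hc'_old hjk]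
      exact hc j hjk
    · rw [hidx'_new, hc'_old le_rfl, hc'_new]
      exact ⟨hy, hz⟩
  · rw [Finset.sum_range_succ, hidx'_new, hc'_old le_rfl, hc'_new]
    congr 1
    refine Finset.sum_congr rfl fun j hj => ?_
    have hjk := Finset.mem_range.1 hj
    rw [hidx'_old hjk, hc'_old hjk.le, hc'_old hjk]

theorem chainSums_induction {x : S} {P : S → ℝ → Prop} (zero : P x 0)
    (add_dTri : ∀ i, ∀ y ∈ T.σ i '' Dtri, ∀ z ∈ T.σ i '' Dtri, ∀ r, P y r →
      P z (r + dTri T l i y z))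
    {y : S} {r : ℝ} (hr : r ∈ chainSums T l x y) : P y r := by
  obtain ⟨k, c, idx, rfl, rfl, hc, rfl⟩ := hr
  induction k with
  | zero => simpa using zero
  | succ k ih =>
    rw [Finset.sum_range_succ]
    obtain ⟨hleft, hright⟩ := hc k k.lt_succ_self
    exact add_dTri _ _ hleft _ hright _ (ih fun j hj => hc j (hj.trans k.lt_succ_self))

theorem add_mem_chainSums {x y z : S} {r r' : ℝ} (hr : r ∈ chainSums T l x y)
    (hr' : r' ∈ chainSums T l y z) : r + r' ∈ chainSums T l x z := by
  refine chainSums_induction (P := fun w s => r + s ∈ chainSums T l x w) ?_ ?_ hr'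
  · rwa [add_zero]
  · intro i v hv w hw s hs
    rw [← add_assoc]
    exact add_dTri_mem_chainSums hs hv hw

theorem dTri_mem_chainSums {i : Fin n} {x y : S} (hx : x ∈ T.σ i '' Dtri)
    (hy : y ∈ T.σ i '' Dtri) : dTri T l i x y ∈ chainSums T l x y := by
  simpa only [zero_add] using add_dTri_mem_chainSums (zero_mem_chainSums T l x) hx hy

variable (T l)

theorem dGlue_self_le_zero (x : S) : dGlue T l x x ≤ 0 :=
  csInf_le (chainSums_bddBelow T l x x) (zero_mem_chainSums T l x)

theorem dGlue_le_dD (i : Fin n) {a b : E2} (ha : a ∈ Dtri) (hb : b ∈ Dtri) :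
    dGlue T l (T.σ i a) (T.σ i b) ≤ dD (lRes T l i) a b :=
  (csInf_le (chainSums_bddBelow T l _ _) (dTri_mem_chainSums (mem_image_of_mem _ ha)
    (mem_image_of_mem _ hb))).trans (dTri_le_dD T l i ha hb)

theorem lipschitzJoined_of_dD_le (i : Fin n) {a b : E2} (ha : a ∈ Dtri) (hb : b ∈ Dtri) {r : ℝ}
    (hr : 0 < r) (hab : dD (lRes T l i) a b ≤ r) :
    LipschitzJoined (dGlue T l) r (T.σ i a) (T.σ i b) := by
  let seg : ℝ → E2 := fun t => AffineMap.lineMap a b (t / r)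
  have hseg_mem {t : ℝ} (h0 : 0 ≤ t) (hr' : t ≤ r) : seg t ∈ Dtri :=
    convex_Dtri.lineMap_mem ha hb ⟨div_nonneg h0 hr.le, div_le_one_of_le₀ hr' hr.le⟩
  have hseg_cont : Continuous seg :=
    AffineMap.lineMap_continuous.comp (continuous_id.div_const r)
  refine ⟨hr.le, T.σ i ∘ seg, ?_, by simp [seg], by simp [seg, hr.ne'], fun s t hs hst ht => ?_⟩
  · exact (T.continuousOn i).comp hseg_cont.continuousOn fun t ht => hseg_mem ht.1 ht.2
  calc dGlue T l (T.σ i (seg s)) (T.σ i (seg t))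
      ≤ dD (lRes T l i) (seg s) (seg t) :=
        dGlue_le_dD T l i (hseg_mem hs (hst.trans ht)) (hseg_mem (hs.trans hst) ht)
    _ = (t / r - s / r) * dD (lRes T l i) a b := by
        rw [dD_lineMap_lineMap, dist_comm, Real.dist_eq,
          abs_of_nonneg (sub_nonneg.2 (div_le_div_of_nonneg_right hst hr.le))]
    _ ≤ (t / r - s / r) * r :=
        mul_le_mul_of_nonneg_left hab (sub_nonneg.2 (div_le_div_of_nonneg_right hst hr.le))
    _ = t - s := by field_simp

variable {T l}

theorem lipschitzJoined_of_dTri_lt {i : Fin n} {x y : S} (hx : x ∈ T.σ i '' Dtri)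
    (hy : y ∈ T.σ i '' Dtri) {r : ℝ} (hr : dTri T l i x y < r) :
    LipschitzJoined (dGlue T l) r x y := by
  obtain ⟨a₀, ha₀, ha₀x⟩ := hx
  obtain ⟨b₀, hb₀, hb₀y⟩ := hy
  obtain ⟨_, ⟨a, ha, b, hb, rfl, rfl, rfl⟩, hab⟩ :=
    exists_lt_of_csInf_lt (by exact ⟨_, a₀, ha₀, b₀, hb₀, ha₀x, hb₀y, rfl⟩) hr
  exact lipschitzJoined_of_dD_le T l i ha hb ((dD_nonneg _ a b).trans_lt hab) hab.le

variable [T2Space S] [PreconnectedSpace S] (T l)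

theorem chainSums_nonempty (x y : S) : (chainSums T l x y).Nonempty := by
  refine rel_of_finite_closed_cover (R := fun x y => (chainSums T l x y).Nonempty)
    T.isClosed_image_Dtri T.exists_mem_image_Dtri ?_ ?_ x y
  · rintro _ _ _ ⟨_, hr⟩ ⟨_, hr'⟩
    exact ⟨_, add_mem_chainSums hr hr'⟩
  · exact fun _ _ hx _ hy => ⟨_, dTri_mem_chainSums hx hy⟩

open scoped Pointwise in
theorem dGlue_triangle (x y z : S) : dGlue T l x z ≤ dGlue T l x y + dGlue T l y z := by
  have hxy := chainSums_nonempty T l x y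
  have hyz := chainSums_nonempty T l y z
  calc dGlue T l x z
      ≤ sInf (chainSums T l x y + chainSums T l y z) :=
        csInf_le_csInf (chainSums_bddBelow T l x z) (hxy.add hyz)
          (add_subset_iff.2 fun _ hr _ hr' => add_mem_chainSums hr hr')
    _ = dGlue T l x y + dGlue T l y z :=
        csInf_add hxy (chainSums_bddBelow T l x y) hyz (chainSums_bddBelow T l y z)

variable {T l}

theorem lipschitzJoined_of_mem_chainSums_lt {x y : S} {s r : ℝ} (hs : s ∈ chainSums T l x y)
    (hsr : s < r) : LipschitzJoined (dGlue T l) r x y := by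
  refine chainSums_induction (P := fun w s => ∀ r > s, LipschitzJoined (dGlue T l) r x w)
    ?_ ?_ hs r hsr
  · exact fun r hr => .refl (dGlue_self_le_zero T l x) hr.le
  · intro i v hv w hw s hxv r hr
    obtain ⟨r₁, hr₁, hr₁r⟩ := exists_between (lt_sub_iff_add_lt.2 hr)
    have hvw : LipschitzJoined (dGlue T l) (r - r₁) v w :=
      lipschitzJoined_of_dTri_lt hv hw (by linarith)
    simpa only [add_sub_cancel] using (hxv r₁ hr₁).trans (dGlue_triangle T l) hvw

theorem lipschitzJoined_of_dGlue_lt {x y : S} {r : ℝ} (hr : dGlue T l x y < r) :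
    LipschitzJoined (dGlue T l) r x y := by
  obtain ⟨s, hs, hsr⟩ := exists_lt_of_csInf_lt (chainSums_nonempty T l x y) hr
  exact lipschitzJoined_of_mem_chainSums_lt hs hsr

end GluedMetric

/-- the metric `d[l]` on `S` is intrinsic: for all `x, y ∈ S`,
`d[l](x,y) = inf { L(γ, d[l]) : γ : [0,1] → S continuous, γ 0 = x, γ 1 = y }`. -/
theorem dGlue_intrinsic
    {S : Type} [TopologicalSpace S] [CompactSpace S] [T2Space S] [ConnectedSpace S]
    {n : ℕ} (T : Triangulation S n) (l : Set S → ℝ) (hl : TriIneqT T l) :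
    ∀ x y : S, ENNReal.ofReal (dGlue T l x y) =
      ⨅ (γ : ℝ → S) (_ : ContinuousOn γ (Icc (0:ℝ) 1) ∧ γ 0 = x ∧ γ 1 = y),
        pathLen (dGlue T l) γ := by
  intro x y
  refine le_antisymm ?_ (ENNReal.le_of_forall_pos_le_add fun ε hε _ => ?_)
  · refine le_iInf₂ ?_
    rintro γ ⟨-, rfl, rfl⟩
    exact ofReal_le_pathLen (dGlue T l) γ
  · have hjoined : LipschitzJoined (dGlue T l) (dGlue T l x y + ε) x y :=
      lipschitzJoined_of_dGlue_lt (lt_add_of_pos_right _ hε)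
    simpa using hjoined.iInf_pathLen_le.trans ENNReal.ofReal_add_le
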